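/- arXiv:1801.09871 — 2 statements merged into one kernel-verified Lean document; each statement's English description precedes it below -/
import Mathlib

section
/- Every 2-packing in the graph Y has at most 2 vertices. -/
/-- `W` is an `i`-packing in `G`: any two distinct vertices of `W` are at
graph distance greater than `i` in `G`. -/
def IsPacking {V : Type*} (G : SimpleGraph V) (i : ℕ) (W : Set V) : Prop :=
  ∀ u ∈ W, ∀ v ∈ W, u ≠ v → i < G.dist u v

/-- `c` is a `k`-packing coloring of `G`: every color lies in `{1, …, k}` and
for each `i ∈ {1, …, k}` the color class `c⁻¹(i)` is an `i`-packing. -/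
def IsPackingColoring {V : Type*} (G : SimpleGraph V) (k : ℕ) (c : V → ℕ) : Prop :=
  (∀ v, 1 ≤ c v ∧ c v ≤ k) ∧ ∀ i, 1 ≤ i → i ≤ k → IsPacking G i {v | c v = i}

/-- The packing chromatic number: the least `k` admitting a `k`-packing coloring. -/
noncomputable def packingChromaticNumber {V : Type*} (G : SimpleGraph V) : ℕ :=
  sInf {k | ∃ c : V → ℕ, IsPackingColoring G k c}


/-- Edges of `Y`; vertices `y1,…,y7` are `0,…,6`. -/
def Yedges : List (Fin 7 × Fin 7) :=
  [(0,1),(1,2),(2,6),(6,5),(5,4),(4,0),(1,3),(3,5)]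

/-- The graph `Y` induced by `y1,…,y7`. -/
def Ygraph : SimpleGraph (Fin 7) :=
  SimpleGraph.fromRel (fun u v => (u, v) ∈ Yedges)

/-!
A closed ball of radius `r` meets a `2r`-packing in at most one vertex, so a `2r`-packing has at
most as many vertices as any set whose closed `r`-balls cover the graph. In `Y`, the closed
neighbourhoods `{y1, y2, y3, y4}` of `y2` and `{y4, y5, y6, y7}` of `y6` cover all vertices.
-/

/-- `D` is a distance-`r` dominating set of `G`: the closed balls of radius `r` centred in `D` cover
`G`; for `r = 1` this is an ordinary dominating set. The distance is `SimpleGraph.edist`, because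
`SimpleGraph.dist` takes the junk value `0` between different components. -/
def IsDominating {V : Type*} (G : SimpleGraph V) (r : ℕ) (D : Set V) : Prop :=
  ∀ v, ∃ d ∈ D, G.edist v d ≤ r

theorem isDominating_one_iff {V : Type*} {G : SimpleGraph V} {D : Set V} :
    IsDominating G 1 D ↔ ∀ v, ∃ d ∈ D, G.Adj v d ∨ v = d := by
  simp only [IsDominating, Nat.cast_one, SimpleGraph.edist_le_one_iff_adj_or_eq]

namespace IsPacking

variable {V : Type*} {G : SimpleGraph V} {W D : Set V} {u v d : V} {i r s : ℕ}

theorem eq_of_edist_le (hW : IsPacking G i W) (hu : u ∈ W) (hv : v ∈ W) (huv : G.edist u v ≤ i) :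
    u = v := by
  by_contra hne
  exact (hW u hu v hv hne).not_ge (ENat.toNat_le_of_le_natCast huv)

theorem eq_of_edist_le_of_edist_le (hW : IsPacking G (r + s) W) (hu : u ∈ W) (hv : v ∈ W)
    (hud : G.edist u d ≤ r) (hvd : G.edist v d ≤ s) : u = v := by
  refine hW.eq_of_edist_le hu hv ?_
  calc
    G.edist u v ≤ G.edist u d + G.edist d v := G.edist_triangle
    _ ≤ r + s := add_le_add hud (G.edist_comm.trans_le hvd)
    _ = (r + s : ℕ) := (Nat.cast_add r s).symm

theorem encard_le_encard_of_isDominating (hW : IsPacking G (r + r) W) (hD : IsDominating G r D) :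
    W.encard ≤ D.encard := by
  choose center center_mem edist_center_le using hD
  have center_injOn : W.InjOn center := fun u hu v hv huv ↦
    hW.eq_of_edist_le_of_edist_le hu hv (edist_center_le u) (huv ▸ edist_center_le v)
  exact Set.encard_le_encard_of_injOn (fun v _ ↦ center_mem v) center_injOn

end IsPacking

theorem isDominating_Ygraph : IsDominating Ygraph 1 {1, 5} := by
  simp only [isDominating_one_iff, Ygraph, SimpleGraph.fromRel_adj, Set.mem_insert_iff,
    Set.mem_singleton_iff]
  decide

/-- Every `2`-packing in `Y` has at most `2` vertices. -/
theorem stmt5 (W : Set (Fin 7)) (hW : IsPacking Ygraph 2 W) : W.ncard ≤ 2 := by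
  have hle : W.encard ≤ (2 : ℕ) := calc
    W.encard ≤ ({1, 5} : Set (Fin 7)).encard :=
      hW.encard_le_encard_of_isDominating isDominating_Ygraph
    _ = (2 : ℕ) := Set.encard_pair (by decide)
  exact (Set.encard_le_coe_iff_finite_ncard_le.mp hle).2
end

section
/- The graph G_0 is connected and has diameter at most 6: any two vertices of G_0 are at distance at most 6. -/
/-- Edges of `H`; vertices `y1,…,y7` are `0,…,6`, `z1,…,z7` are `7,…,13`,
and `w` is `14`. -/
def Hedges : List (Fin 15 × Fin 15) :=
  [(0,1),(1,2),(2,6),(6,5),(5,4),(4,0),(1,3),(3,5),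
   (7,8),(8,9),(9,13),(13,12),(12,11),(11,7),(8,10),(10,12),
   (3,14),(14,10),(2,7),(4,13)]

/-- The graph `H`. -/
def Hgraph : SimpleGraph (Fin 15) :=
  SimpleGraph.fromRel (fun u v => (u, v) ∈ Hedges)

/-- Glue two disjoint copies of `G` together with five new vertices
`Sum.inr (Sum.inr i)` for `i : Fin 5`: the `i`-th new vertex is adjacent
exactly to `p i` in the first copy and to `q i` in the second copy. -/
def glue {V : Type*} (G : SimpleGraph V) (p q : Fin 5 → V) :
    SimpleGraph (V ⊕ V ⊕ Fin 5) :=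
  SimpleGraph.fromRel (fun u v =>
    match u, v with
    | Sum.inl a, Sum.inl b => G.Adj a b
    | Sum.inr (Sum.inl a), Sum.inr (Sum.inl b) => G.Adj a b
    | Sum.inr (Sum.inr i), Sum.inl a => a = p i
    | Sum.inr (Sum.inr i), Sum.inr (Sum.inl b) => b = q i
    | _, _ => False)

/-- Attachment points of `a,b,c,d,x` in the first copy (`H'`):
`a ↦ y5`, `b ↦ z7`, `c ↦ y3`, `d ↦ z1`, `x ↦ w`. -/
def pH : Fin 5 → Fin 15 := ![4, 13, 2, 7, 14]

/-- Attachment points of `a,b,c,d,x` in the second copy (`H''`):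
`a ↦ y1`, `b ↦ z3`, `c ↦ z5`, `d ↦ y7`, `x ↦ w`. -/
def qH : Fin 5 → Fin 15 := ![0, 9, 11, 6, 14]

/-- The graph `G₀`: two disjoint copies of `H` plus the five vertices
`a,b,c,d,x`, which are `Sum.inr (Sum.inr 0), …, Sum.inr (Sum.inr 4)`. -/
def G₀ : SimpleGraph (Fin 15 ⊕ Fin 15 ⊕ Fin 5) := glue Hgraph pH qH


/-!
Write `d` for the distance in `H`. Each new vertex is one step away from either copy of `H`, so a
walk that starts, ends or crosses over at new vertices has at most two edges outside the copies.
Hence it suffices that `H` has diameter at most `4`, and that any `a` in the first copy and `b` in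
the second admit a new vertex `i` with `d(a, pᵢ) + d(qᵢ, b) ≤ 4`. Both are finite checks, made by
deciding `d(u, v) ≤ n` recursively over the neighbours of `u`.
-/

section ExtendedDistance

variable {V V' : Type*} {G : SimpleGraph V} {G' : SimpleGraph V'}

theorem edist_hom_le (f : G →g G') (u v : V) : G'.edist (f u) (f v) ≤ G.edist u v :=
  le_iInf fun walk =>
    (SimpleGraph.edist_le (walk.map f)).trans_eq (by rw [SimpleGraph.Walk.length_map])

theorem edist_le_natCast_add_one_iff {u v : V} {n : ℕ} :
    G.edist u v ≤ (n + 1 : ℕ) ↔ G.edist u v ≤ n ∨ ∃ w, G.Adj u w ∧ G.edist w v ≤ n := by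
  constructor
  · intro h
    obtain ⟨walk, hwalk⟩ :=
      SimpleGraph.exists_walk_of_edist_ne_top (h.trans_lt (ENat.natCast_lt_top _)).ne
    rw [← hwalk, Nat.cast_le] at h
    cases walk with
    | nil => simp
    | cons hadj tail =>
      rw [SimpleGraph.Walk.length_cons, Nat.add_le_add_iff_right] at h
      exact .inr ⟨_, hadj, (SimpleGraph.edist_le tail).trans (Nat.cast_le.2 h)⟩
  · rintro (h | ⟨w, hadj, h⟩)
    · exact h.trans (Nat.cast_le.2 n.le_succ)
    · calc
        G.edist u v ≤ G.edist u w + G.edist w v := SimpleGraph.edist_triangle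
        _ ≤ 1 + n := add_le_add (SimpleGraph.edist_eq_one_iff_adj.2 hadj).le h
        _ = (n + 1 : ℕ) := by rw [add_comm, Nat.cast_succ]

instance decidableEdistLe [Fintype V] [DecidableEq V] [DecidableRel G.Adj] :
    (n : ℕ) → (u v : V) → Decidable (G.edist u v ≤ n)
  | 0, u, v => decidable_of_iff (u = v) (by simp)
  | n + 1, u, v =>
    have := decidableEdistLe n
    decidable_of_iff _ edist_le_natCast_add_one_iff.symm

theorem dist_le_of_ediam_le {k : ℕ} (h : G.ediam ≤ k) (u v : V) : G.dist u v ≤ k :=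
  ENat.toNat_le_of_le_natCast (SimpleGraph.edist_le_ediam.trans h)

end ExtendedDistance

section Glue

variable {V : Type*} (G : SimpleGraph V) (p q : Fin 5 → V)

/-- The inclusion of the first copy of `G` into `glue G p q`. -/
def glueLeft : G →g glue G p q where
  toFun := Sum.inl
  map_rel' h := ⟨Sum.inl_injective.ne h.ne, .inl h⟩

/-- The inclusion of the second copy of `G` into `glue G p q`. -/
def glueRight : G →g glue G p q where
  toFun a := Sum.inr (Sum.inl a)
  map_rel' h := ⟨(Sum.inr_injective.comp Sum.inl_injective).ne h.ne, .inl h⟩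

variable {G p q}

theorem glue_adj_new_left (i : Fin 5) :
    (glue G p q).Adj (Sum.inr (Sum.inr i)) (Sum.inl (p i)) :=
  ⟨Sum.inr_ne_inl, .inl rfl⟩

theorem glue_adj_new_right (i : Fin 5) :
    (glue G p q).Adj (Sum.inr (Sum.inr i)) (Sum.inr (Sum.inl (q i))) :=
  ⟨Sum.inr_injective.ne Sum.inr_ne_inl, .inl rfl⟩

theorem edist_glue_left_left_le (a b : V) :
    (glue G p q).edist (Sum.inl a) (Sum.inl b) ≤ G.edist a b :=
  edist_hom_le (glueLeft G p q) a b

theorem edist_glue_right_right_le (a b : V) :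
    (glue G p q).edist (Sum.inr (Sum.inl a)) (Sum.inr (Sum.inl b)) ≤ G.edist a b :=
  edist_hom_le (glueRight G p q) a b

theorem edist_glue_left_new_le (a : V) (i : Fin 5) :
    (glue G p q).edist (Sum.inl a) (Sum.inr (Sum.inr i)) ≤ G.edist a (p i) + 1 :=
  SimpleGraph.edist_triangle.trans <| add_le_add (edist_glue_left_left_le a (p i))
    (SimpleGraph.edist_eq_one_iff_adj.2 (glue_adj_new_left i).symm).le

theorem edist_glue_new_right_le (i : Fin 5) (b : V) :
    (glue G p q).edist (Sum.inr (Sum.inr i)) (Sum.inr (Sum.inl b)) ≤ 1 + G.edist (q i) b :=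
  SimpleGraph.edist_triangle.trans <| add_le_add
    (SimpleGraph.edist_eq_one_iff_adj.2 (glue_adj_new_right i)).le
    (edist_glue_right_right_le (q i) b)

theorem edist_glue_left_right_le (a b : V) (i : Fin 5) :
    (glue G p q).edist (Sum.inl a) (Sum.inr (Sum.inl b)) ≤
      G.edist a (p i) + G.edist (q i) b + 2 :=
  calc
    _ ≤ (G.edist a (p i) + 1) + (1 + G.edist (q i) b) :=
      SimpleGraph.edist_triangle.trans <|
        add_le_add (edist_glue_left_new_le a i) (edist_glue_new_right_le i b)
    _ = G.edist a (p i) + G.edist (q i) b + 2 := by ring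

theorem edist_glue_new_new_le (i j : Fin 5) :
    (glue G p q).edist (Sum.inr (Sum.inr i)) (Sum.inr (Sum.inr j)) ≤
      G.edist (p i) (p j) + 2 :=
  calc
    _ ≤ 1 + (G.edist (p i) (p j) + 1) :=
      SimpleGraph.edist_triangle.trans <| add_le_add
        (SimpleGraph.edist_eq_one_iff_adj.2 (glue_adj_new_left i)).le
        (edist_glue_left_new_le (p i) j)
    _ = G.edist (p i) (p j) + 2 := by ring

theorem ediam_glue_le {k : ℕ∞} (hdiam : G.ediam ≤ k)
    (hcross : ∀ a b, ∃ i, G.edist a (p i) + G.edist (q i) b ≤ k) :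
    (glue G p q).ediam ≤ k + 2 := by
  have hG (a b : V) : G.edist a b ≤ k := SimpleGraph.edist_le_ediam.trans hdiam
  have left_right (a b : V) :
      (glue G p q).edist (Sum.inl a) (Sum.inr (Sum.inl b)) ≤ k + 2 := by
    obtain ⟨i, hi⟩ := hcross a b
    exact (edist_glue_left_right_le a b i).trans (by gcongr)
  have left_new (a : V) (i : Fin 5) :
      (glue G p q).edist (Sum.inl a) (Sum.inr (Sum.inr i)) ≤ k + 2 :=
    (edist_glue_left_new_le a i).trans (add_le_add (hG _ _) one_le_two)
  have new_right (i : Fin 5) (b : V) :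
      (glue G p q).edist (Sum.inr (Sum.inr i)) (Sum.inr (Sum.inl b)) ≤ k + 2 :=
    (edist_glue_new_right_le i b).trans <|
      (add_le_add one_le_two (hG _ _)).trans_eq (add_comm _ _)
  refine SimpleGraph.ediam_le_of_edist_le ?_
  rintro (a | a | i) (b | b | j)
  · exact (edist_glue_left_left_le a b).trans (le_add_right (hG a b))
  · exact left_right a b
  · exact left_new a j
  · exact SimpleGraph.edist_comm.trans_le (left_right b a)
  · exact (edist_glue_right_right_le a b).trans (le_add_right (hG a b))
  · exact SimpleGraph.edist_comm.trans_le (new_right j a)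
  · exact SimpleGraph.edist_comm.trans_le (left_new b i)
  · exact new_right i b
  · exact (edist_glue_new_new_le i j).trans (by gcongr; exact hG _ _)

end Glue

instance decidableRelHgraphAdj : DecidableRel Hgraph.Adj := fun u v =>
  decidable_of_iff (u ≠ v ∧ ((u, v) ∈ Hedges ∨ (v, u) ∈ Hedges)) Iff.rfl

theorem ediam_Hgraph_le : Hgraph.ediam ≤ (4 : ℕ) :=
  SimpleGraph.ediam_le_of_edist_le (by decide +kernel)

theorem exists_edist_pH_add_edist_qH_le (a b : Fin 15) :
    ∃ i, Hgraph.edist a (pH i) + Hgraph.edist (qH i) b ≤ (4 : ℕ) := by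
  have exists_split : ∀ a b : Fin 15, ∃ i, ∃ r : Fin 5,
      Hgraph.edist a (pH i) ≤ (r : ℕ) ∧ Hgraph.edist (qH i) b ≤ (4 - r : ℕ) := by
    decide +kernel
  obtain ⟨i, r, hp, hq⟩ := exists_split a b
  refine ⟨i, (add_le_add hp hq).trans_eq ?_⟩
  rw [← Nat.cast_add, Nat.add_sub_cancel' (Nat.le_of_lt_succ r.isLt)]

theorem ediam_G₀_le : G₀.ediam ≤ (6 : ℕ) :=
  ediam_glue_le ediam_Hgraph_le exists_edist_pH_add_edist_qH_le

/-- `G₀` is connected and any two of its vertices are at distance at most `6`. -/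
theorem stmt7 :
    G₀.Connected ∧ ∀ u v, G₀.dist u v ≤ 6 :=
  ⟨SimpleGraph.connected_of_ediam_ne_top (ediam_G₀_le.trans_lt (ENat.natCast_lt_top 6)).ne,
    dist_le_of_ediam_le ediam_G₀_le⟩
end
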